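/- (Theorem 2, scan test with known edge probabilities is powerful.) Suppose r(n) = o(n), suppose that min over C ⊆ V_n with |C| = r and over all maximizers D*_C of λ_C·E_0[e(D*_C)] tends to +∞ as n → ∞ (note E_C[e(D)] = λ_C·E_0[e(D)] for D ⊆ C), and suppose that for all sufficiently large n and every C ⊆ V_n with |C| = r, max over nonempty D ⊆ C of E_0[e(D)]·h(λ_C − 1)/(|D|·log(n/|D|)) ≥ 1 + ε, where ε > 0 is the constant used in the scan test. Then the known-probability scan test is asymptotically powerful: R_n(ψ^{scan}_n) → 0 as n → ∞. -/

import Mathlib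

/-!
The scan test works because `h` is the Poisson large-deviation rate: the moment generating
function of `e(D)` is at most that of a Poisson variable with the same mean (`mgf_le`), and the
exponential Markov inequality (`prob_chernoff`) turns this into bounds for both errors.

*Type I.* Bennett's inequality (`prob_bennett`) gives
`P₀(Ψ_D ≥ 1 + ε/2) ≤ exp (-(1 + ε/2) |D| log (n/|D|))`. There are at most `(e n / k) ^ k` sets of
size `k`, so the union bound is dominated by a geometric series with ratio
`e (r/n) ^ (ε/2) → 0` (`type_one_le`).

*Type II.* Since `h(λ_C - 1)` does not depend on `D`, a maximizer `D` of the objective attains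
the maximum in the scan condition (`exists_maximizer`). With `μ = E₀[e(D)]`, convexity of `h`
shows that the test rejects as soon as `e(D) > λμ - δ(λ - 1)μ` for a small constant `δ`
(`hFun_shrink`). The mean of `e(D)` is `λμ`, so the lower Chernoff tail bounds the
failure probability by `exp (-δ² (λ - 1)² μ / (4 λ))`. For `λ ≤ 2` the exponent is large because
`(λ - 1)² μ ≥ μ h(λ - 1) ≥ log (n/r) → ∞`; for `λ > 2` it is large because `λμ → ∞`
(`type_two_le`).
-/

open Finset Filter Asymptotics

namespace CommunityDetection

/-- Potential edges of a graph on `Fin n`: ordered pairs `i < j` of vertices. -/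
abbrev Edge (n : ℕ) := {q : Fin n × Fin n // q.1 < q.2}

/-- A realization of the random graph: presence/absence of each potential edge. -/
abbrev Config (n : ℕ) := Edge n → Bool

/-- Probability of the event `E` when the edge indicators are independent Bernoulli
random variables with parameters `w`. -/
noncomputable def prob (n : ℕ) (w : Edge n → ℝ) (E : Set (Config n)) : ℝ :=
  ∑ a : Config n, E.indicator (fun a => ∏ e : Edge n, (if a e then w e else 1 - w e)) a

/-- Null hypothesis edge parameters. -/
def nullW (n : ℕ) (p : Fin n → Fin n → ℝ) : Edge n → ℝ := fun e => p e.1.1 e.1.2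

/-- Alternative hypothesis edge parameters: a community `C` with scaling `lam`. -/
def altW (n : ℕ) (p : Fin n → Fin n → ℝ) (lam : ℝ) (C : Finset (Fin n)) : Edge n → ℝ :=
  fun e => if e.1.1 ∈ C ∧ e.1.2 ∈ C then lam * p e.1.1 e.1.2 else p e.1.1 e.1.2

/-- The number of edges `e(D)` inside a vertex set `D`. -/
def eCount (n : ℕ) (D : Finset (Fin n)) (a : Config n) : ℝ :=
  ∑ e : Edge n, if e.1.1 ∈ D ∧ e.1.2 ∈ D ∧ a e = true then 1 else 0

/-- The expected number of edges `E₀[e(D)]` inside `D` under the null hypothesis. -/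
def expCount (n : ℕ) (p : Fin n → Fin n → ℝ) (D : Finset (Fin n)) : ℝ :=
  ∑ e : Edge n, if e.1.1 ∈ D ∧ e.1.2 ∈ D then p e.1.1 e.1.2 else 0

/-- The average edge probability `p̄_D` of `D`. -/
noncomputable def pbar (n : ℕ) (p : Fin n → Fin n → ℝ) (D : Finset (Fin n)) : ℝ :=
  expCount n p D / (D.card.choose 2 : ℝ)

/-- The entropy function `h(x) = (x+1)log(x+1) - x`. -/
noncomputable def hFun (x : ℝ) : ℝ := (x + 1) * Real.log (x + 1) - x

/-- The worst-case risk of a test `ψ`: type-I error plus the worst type-II error over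
all communities of size `r`. -/
noncomputable def risk (n r : ℕ) (p : Fin n → Fin n → ℝ) (lam : Finset (Fin n) → ℝ)
    (ψ : Config n → Bool) : ℝ :=
  prob n (nullW n p) {a | ψ a = true} +
    sSup {x | ∃ C : Finset (Fin n), C.card = r ∧
      x = prob n (altW n p (lam C) C) {a | ψ a = false}}

/-- `max_{∅ ≠ D ⊆ C} E₀[e(D)] h(λ_C - 1) / (|D| log(n/|D|))`. -/
noncomputable def condSup (n : ℕ) (p : Fin n → Fin n → ℝ) (lamC : ℝ) (C : Finset (Fin n)) : ℝ :=
  sSup {x | ∃ D : Finset (Fin n), D ⊆ C ∧ D.Nonempty ∧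
    x = expCount n p D * hFun (lamC - 1) / ((D.card : ℝ) * Real.log ((n : ℝ) / (D.card : ℝ)))}

/-- Assumption 1.1. -/
def Assumption11 (p : ∀ n, Fin n → Fin n → ℝ) (r : ℕ → ℕ) : Prop :=
  ∃ δ : ℝ, δ ∈ Set.Ioo (0 : ℝ) (1/2) ∧
    ((fun n => (r n : ℝ)) =O[atTop] fun n => (n : ℝ) ^ ((1 : ℝ)/2 - δ)) ∧
    (∃ γ : ℕ → ℝ, (∀ n, 0 < γ n) ∧ Tendsto γ atTop (nhds 0) ∧
      ∀ n : ℕ, ∀ C : Finset (Fin n), C.card = r n → ∀ D : Finset (Fin n), D ⊆ C → D.Nonempty →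
        (D.card : ℝ) < (r n : ℝ) / ((n : ℝ) / (r n : ℝ)) ^ (γ n) →
        (D.card : ℝ) * pbar n (p n) D / ((r n : ℝ) * pbar n (p n) C) ≤ δ) ∧
    ((fun n => sSup {x | ∃ C : Finset (Fin n), C.card = r n ∧ x = 1 / pbar n (p n) C})
      =o[atTop] fun n => (r n : ℝ) / Real.log ((n : ℝ) / (r n : ℝ)))

/-- Assumption 1.2. -/
def Assumption12 (p : ∀ n, Fin n → Fin n → ℝ) (r : ℕ → ℕ) : Prop :=
  Tendsto (fun n => Real.log (r n : ℝ) / Real.log (n : ℝ)) atTop (nhds 0) ∧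
  ((fun n => sSup {x | ∃ C : Finset (Fin n), C.card = r n ∧ x = Real.log (1 / pbar n (p n) C)})
    =o[atTop] fun n => Real.log ((n : ℝ) / (r n : ℝ)) / Real.log (r n : ℝ))

/-- Assumption 2. -/
def Assumption2 (p : ∀ n, Fin n → Fin n → ℝ) (r : ℕ → ℕ) (lam : ∀ n, Finset (Fin n) → ℝ) :
    Prop :=
  Tendsto (fun n => sSup {x | ∃ C : Finset (Fin n), C.card = r n ∧
    ∃ i ∈ C, ∃ j ∈ C, i ≠ j ∧ x = (lam n C)^2 * p n i j}) atTop (nhds 0)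

/-- The known-probability scan statistic `Ψ_D`. -/
noncomputable def scanStat (n : ℕ) (p : Fin n → Fin n → ℝ) (D : Finset (Fin n))
    (a : Config n) : ℝ :=
  if 0 < expCount n p D then
    expCount n p D * hFun (max (eCount n D a / expCount n p D - 1) 0) /
      ((D.card : ℝ) * Real.log ((n : ℝ) / (D.card : ℝ)))
  else 0

/-- The known-probability scan test. -/
noncomputable def scanTest (n r : ℕ) (p : Fin n → Fin n → ℝ) (ε : ℝ) (a : Config n) : Bool :=
  if 1 + ε / 2 ≤
      sSup {x | ∃ D : Finset (Fin n), D.Nonempty ∧ D.card ≤ r ∧ x = scanStat n p D a}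
  then true else false

/-- The objective defining the most informative subgraph `D*_C`. -/
noncomputable def objective (n : ℕ) (p : Fin n → Fin n → ℝ) (D : Finset (Fin n)) : ℝ :=
  expCount n p D / ((D.card : ℝ) * Real.log ((n : ℝ) / (D.card : ℝ)))

/-- The number of edges `e(D, -D)` between `D` and its complement. -/
def eCross (n : ℕ) (D : Finset (Fin n)) (a : Config n) : ℝ :=
  ∑ e : Edge n,
    if ((e.1.1 ∈ D ∧ e.1.2 ∉ D) ∨ (e.1.1 ∉ D ∧ e.1.2 ∈ D)) ∧ a e = true then 1 else 0

/-- The estimator `ê(D)` of `E₀[e(D)]`. -/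
noncomputable def estCount (n : ℕ) (D : Finset (Fin n)) (a : Config n) : ℝ :=
  (Real.sqrt (eCount n Finset.univ a) -
    Real.sqrt (eCount n Finset.univ a - 2 * eCross n D a))^2 / 4

/-- The thresholded estimator `ê_τ(D)`. -/
noncomputable def estCountTr (n : ℕ) (D : Finset (Fin n)) (a : Config n) : ℝ :=
  max (estCount n D a) ((D.card : ℝ)^2 / (n : ℝ) * (Real.log ((n : ℝ) / (D.card : ℝ)))^4)

/-- The unknown-probability scan statistic `Ψᵘ_D`. -/
noncomputable def scanStatU (n : ℕ) (D : Finset (Fin n)) (a : Config n) : ℝ :=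
  estCountTr n D a * hFun (max (eCount n D a / estCountTr n D a - 1) 0) /
    ((D.card : ℝ) * Real.log ((n : ℝ) / (D.card : ℝ)))

/-- The unknown-probability scan test. -/
noncomputable def scanTestU (n r : ℕ) (ε : ℝ) (a : Config n) : Bool :=
  if 1 + ε / 3 ≤
      sSup {x | ∃ D : Finset (Fin n),
        (r : ℝ) ^ ((1 : ℝ)/3) ≤ (D.card : ℝ) ∧ D.card ≤ r ∧ x = scanStatU n D a}
  then true else false

/-- Assumption 3: maximal inhomogeneity of rank-1 weights. -/
def Assumption3 (θ : ∀ n, Fin n → ℝ) (r : ℕ → ℕ) : Prop :=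
  (fun n => (sSup (Set.range (θ n)) / sInf (Set.range (θ n)))^2) =o[atTop]
    fun n => min ((r n : ℝ) ^ ((2 : ℝ)/3)) ((n : ℝ) / (r n : ℝ) * (sInf (Set.range (θ n)))^2)

/-! ### The Chernoff bound -/

/-- `E[e(D)]` for independent edge indicators with parameters `w`. -/
noncomputable def meanCount (n : ℕ) (w : Edge n → ℝ) (D : Finset (Fin n)) : ℝ :=
  ∑ e : Edge n, if e.1.1 ∈ D ∧ e.1.2 ∈ D then w e else 0

lemma weight_nonneg {n : ℕ} {w : Edge n → ℝ} (hw : ∀ e, w e ∈ Set.Icc (0 : ℝ) 1)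
    (a : Config n) : 0 ≤ ∏ e : Edge n, (if a e then w e else 1 - w e) := by
  refine Finset.prod_nonneg fun e _ => ?_
  have := hw e
  split_ifs
  · exact this.1
  · linarith [this.2]

lemma prob_nonneg {n : ℕ} {w : Edge n → ℝ} (hw : ∀ e, w e ∈ Set.Icc (0 : ℝ) 1)
    (E : Set (Config n)) : 0 ≤ prob n w E :=
  Finset.sum_nonneg fun a _ => Set.indicator_nonneg (fun a _ => weight_nonneg hw a) a

lemma prob_mono {n : ℕ} {w : Edge n → ℝ} (hw : ∀ e, w e ∈ Set.Icc (0 : ℝ) 1)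
    {E F : Set (Config n)} (h : E ⊆ F) : prob n w E ≤ prob n w F :=
  Finset.sum_le_sum fun a _ =>
    Set.indicator_le_indicator_of_subset h (fun a => weight_nonneg hw a) a

/-- Union bound. -/
lemma prob_le_sum {n : ℕ} {w : Edge n → ℝ} (hw : ∀ e, w e ∈ Set.Icc (0 : ℝ) 1) {ι : Type*}
    (s : Finset ι) (E : Set (Config n)) (F : ι → Set (Config n))
    (h : ∀ a ∈ E, ∃ i ∈ s, a ∈ F i) : prob n w E ≤ ∑ i ∈ s, prob n w (F i) := by
  unfold prob
  rw [Finset.sum_comm]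
  refine Finset.sum_le_sum fun a _ => ?_
  have hnn : ∀ i ∈ s, 0 ≤ (F i).indicator
      (fun a => ∏ e : Edge n, (if a e then w e else 1 - w e)) a :=
    fun i _ => Set.indicator_nonneg (fun a _ => weight_nonneg hw a) a
  by_cases ha : a ∈ E
  · obtain ⟨i, hi, hai⟩ := h a ha
    refine le_trans ?_ (Finset.single_le_sum hnn hi)
    rw [Set.indicator_of_mem ha, Set.indicator_of_mem hai]
  · rw [Set.indicator_of_notMem ha]
    exact Finset.sum_nonneg hnn

/-- The moment generating function of `e(D)` is dominated by that of a Poisson variable with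
the same mean. -/
lemma mgf_le {n : ℕ} {w : Edge n → ℝ} (hw : ∀ e, w e ∈ Set.Icc (0 : ℝ) 1)
    (D : Finset (Fin n)) (s : ℝ) :
    ∑ a : Config n, (∏ e : Edge n, (if a e then w e else 1 - w e)) *
      Real.exp (s * eCount n D a) ≤ Real.exp ((Real.exp s - 1) * meanCount n w D) := by
  have h1 : ∀ a : Config n, (∏ e : Edge n, (if a e then w e else 1 - w e)) *
      Real.exp (s * eCount n D a) = ∏ e : Edge n, (if a e then w e else 1 - w e) *
        Real.exp (s * if e.1.1 ∈ D ∧ e.1.2 ∈ D ∧ a e = true then 1 else 0) := by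
    intro a
    rw [Finset.prod_mul_distrib, eCount, Finset.mul_sum, Real.exp_sum]
  have h2 := Fintype.prod_sum (fun (e : Edge n) (b : Bool) =>
    (if b then w e else 1 - w e) *
      Real.exp (s * if e.1.1 ∈ D ∧ e.1.2 ∈ D ∧ b = true then 1 else 0))
  rw [Finset.sum_congr rfl fun a _ => h1 a]
  refine (le_of_eq h2.symm).trans ?_
  rw [meanCount, Finset.mul_sum, Real.exp_sum]
  refine Finset.prod_le_prod (fun e _ => ?_) fun e _ => ?_
  · refine Finset.sum_nonneg fun b _ => mul_nonneg ?_ (Real.exp_pos _).le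
    have := hw e
    split_ifs
    · exact this.1
    · linarith [this.2]
  · rw [Fintype.sum_bool]
    by_cases hD : e.1.1 ∈ D ∧ e.1.2 ∈ D
    · have := Real.add_one_le_exp ((Real.exp s - 1) * w e)
      simp [hD.1, hD.2]
      linarith
    · simp [hD]

/-- Exponential Markov inequality, for both signs of `s`: `s > 0` gives upper tails and
`s < 0` lower tails. -/
lemma prob_chernoff {n : ℕ} {w : Edge n → ℝ} (hw : ∀ e, w e ∈ Set.Icc (0 : ℝ) 1)
    (D : Finset (Fin n)) (s c : ℝ) (E : Set (Config n))
    (hE : ∀ a ∈ E, s * c ≤ s * eCount n D a) :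
    prob n w E ≤ Real.exp ((Real.exp s - 1) * meanCount n w D - s * c) := by
  rw [Real.exp_sub, le_div_iff₀ (Real.exp_pos _)]
  refine le_trans ?_ (mgf_le hw D s)
  rw [prob, Finset.sum_mul]
  refine Finset.sum_le_sum fun a _ => ?_
  by_cases ha : a ∈ E
  · rw [Set.indicator_of_mem ha]
    exact mul_le_mul_of_nonneg_left (Real.exp_le_exp.2 (hE a ha)) (weight_nonneg hw a)
  · rw [Set.indicator_of_notMem ha, zero_mul]
    exact mul_nonneg (weight_nonneg hw a) (Real.exp_pos _).le

/-! ### The entropy function -/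

/-- The graph of the convex function `h` lies above its tangent at `x`, whose
slope is `log (x + 1)`. -/
lemma hFun_tangent {x y : ℝ} (hx : 0 ≤ x) (hy : 0 ≤ y) :
    hFun x + (y - x) * Real.log (x + 1) ≤ hFun y := by
  have h := Real.one_sub_inv_le_log_of_pos (x := (y + 1) / (x + 1)) (by positivity)
  rw [Real.log_div (by positivity) (by positivity), inv_div] at h
  have h2 := mul_le_mul_of_nonneg_left h (by positivity : 0 ≤ y + 1)
  have h3 : (y + 1) * (1 - (x + 1) / (y + 1)) = y - x := by
    field_simp
    ring
  rw [h3] at h2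
  unfold hFun
  nlinarith

lemma hFun_mono {x y : ℝ} (hx : 0 ≤ x) (hxy : x ≤ y) : hFun x ≤ hFun y := by
  have h := hFun_tangent hx (hx.trans hxy)
  have := mul_nonneg (sub_nonneg.2 hxy) (Real.log_nonneg (by linarith : 1 ≤ x + 1))
  linarith

lemma hFun_zero : hFun 0 = 0 := by simp [hFun]

lemma hFun_nonneg {x : ℝ} (hx : 0 ≤ x) : 0 ≤ hFun x := by
  have := hFun_mono le_rfl hx
  rwa [hFun_zero] at this

lemma hFun_le_sq {x : ℝ} (hx : 0 ≤ x) : hFun x ≤ x ^ 2 := by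
  have := Real.log_le_sub_one_of_pos (by linarith : 0 < x + 1)
  unfold hFun
  nlinarith

/-- Shrinking the argument of `h` by a factor `1 - δ` costs at most a factor `1 - 2δ`,
uniformly in the argument. -/
lemma hFun_shrink {x δ : ℝ} (hx : 0 ≤ x) (hδ : 0 ≤ δ) (hδ1 : δ ≤ 1) :
    (1 - 2 * δ) * hFun x ≤ hFun ((1 - δ) * x) := by
  have h := hFun_tangent hx (mul_nonneg (sub_nonneg.2 hδ1) hx)
  have h2 := Real.le_log_one_add_of_nonneg hx
  rw [div_le_iff₀ (by linarith), add_comm 1 x] at h2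
  have h3 : x * Real.log (x + 1) ≤ 2 * hFun x := by
    unfold hFun
    nlinarith
  have h4 := mul_le_mul_of_nonneg_left h3 hδ
  nlinarith

/-! ### Type-I error -/

/-- Bennett's inequality in the normalization of the scan statistic. -/
lemma prob_bennett {n : ℕ} {w : Edge n → ℝ} (hw : ∀ e, w e ∈ Set.Icc (0 : ℝ) 1)
    (D : Finset (Fin n)) (hμ : 0 < meanCount n w D) {t : ℝ} (ht : 0 < t) :
    prob n w {a | t ≤ meanCount n w D * hFun (max (eCount n D a / meanCount n w D - 1) 0)} ≤
      Real.exp (-t) := by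
  classical
  set μ := meanCount n w D with hμdef
  set E : Set (Config n) := {a | t ≤ μ * hFun (max (eCount n D a / μ - 1) 0)} with hEdef
  by_cases hne : (Finset.univ.filter (· ∈ E)).Nonempty
    -- On the event, `e(D)` is at least its smallest value `eCount n D a₀` there, so inverting
    -- `h` is not needed.
  · obtain ⟨a₀, ha₀, hmin⟩ := Finset.exists_min_image _ (eCount n D) hne
    have ha₀E : t ≤ μ * hFun (max (eCount n D a₀ / μ - 1) 0) := by
      simpa [hEdef] using ha₀
    set x := eCount n D a₀ / μ - 1 with hx
    have hx0 : 0 < x := by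
      by_contra hcon
      rw [max_eq_right (not_lt.1 hcon), hFun_zero] at ha₀E
      linarith
    rw [max_eq_left hx0.le] at ha₀E
    have hlog : 0 ≤ Real.log (x + 1) := Real.log_nonneg (by linarith)
    have hc := prob_chernoff hw D (Real.log (x + 1)) (eCount n D a₀) E fun a ha =>
      mul_le_mul_of_nonneg_left (hmin a (by simpa using ha)) hlog
    refine hc.trans (Real.exp_le_exp.2 ?_)
    rw [Real.exp_log (by linarith)]
    have he : eCount n D a₀ = μ * (x + 1) := by
      rw [hx]
      field_simp
      ring
    rw [he, ← hμdef]
    unfold hFun at ha₀E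
    nlinarith
  · have hE : E = ∅ := by
      rw [Set.eq_empty_iff_forall_notMem]
      intro a ha
      exact hne ⟨a, by simpa using ha⟩
    rw [hE]
    simp [prob, (Real.exp_pos _).le]

lemma log_div_card_ge {n r k : ℕ} (hk : 1 ≤ k) (hkr : k ≤ r) (hrn : r < n) :
    Real.log ((n : ℝ) / r) ≤ Real.log ((n : ℝ) / k) := by
  have hk' : (0 : ℝ) < k := by exact_mod_cast hk
  have hr' : (0 : ℝ) < r := by exact_mod_cast hk.trans hkr
  have hn' : (0 : ℝ) < n := by exact_mod_cast (show 0 < n by omega)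
  refine Real.log_le_log (by positivity) ?_
  gcongr

lemma log_div_pos {n r : ℕ} (hr : 1 ≤ r) (hrn : r < n) : 0 < Real.log ((n : ℝ) / r) := by
  have hr' : (0 : ℝ) < r := by exact_mod_cast hr
  refine Real.log_pos ?_
  rw [one_lt_div hr']
  exact_mod_cast hrn

/-- The contribution of the sets of size `k` to the union bound is at most the `k`-th term of
a geometric series with ratio `e · (r / n) ^ (ε / 2)`. -/
lemma choose_mul_exp_le {n r k : ℕ} {ε : ℝ} (hε : 0 < ε) (hk : 1 ≤ k) (hkr : k ≤ r)
    (hrn : r < n) :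
    (n.choose k : ℝ) * Real.exp (-((1 + ε / 2) * (k * Real.log ((n : ℝ) / k)))) ≤
      Real.exp (1 - ε / 2 * Real.log ((n : ℝ) / r)) ^ k := by
  have hk' : (0 : ℝ) < k := by exact_mod_cast hk
  have hn' : (0 : ℝ) < n := by exact_mod_cast (show 0 < n by omega)
  have hL := log_div_card_ge hk hkr hrn
  set L := Real.log ((n : ℝ) / r)
  set l := Real.log ((n : ℝ) / k) with hl
  have h1 : Real.exp (-((1 + ε / 2) * (k * l))) =
      ((k : ℝ) / n) ^ k * Real.exp (-(ε / 2 * (k * l))) := by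
    have : ((k : ℝ) / n) = Real.exp (-l) := by
      rw [hl, ← Real.log_inv, inv_div, Real.exp_log (by positivity)]
    rw [this, ← Real.exp_nat_mul, ← Real.exp_add]
    congr 1
    ring
  calc (n.choose k : ℝ) * Real.exp (-((1 + ε / 2) * (k * l)))
      ≤ ((n : ℝ) ^ k / k.factorial) *
          (((k : ℝ) / n) ^ k * Real.exp (-(ε / 2 * (k * l)))) := by
        rw [h1]
        gcongr
        exact Nat.choose_le_pow_div k n
    _ = ((k : ℝ) ^ k / k.factorial) * Real.exp (-(ε / 2 * (k * l))) := by
        rw [div_pow]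
        field_simp
    _ ≤ Real.exp k * Real.exp (-(ε / 2 * (k * L))) := by
        gcongr
        exact Real.pow_div_factorial_le_exp _ hk'.le k
    _ = Real.exp (1 - ε / 2 * L) ^ k := by
        rw [← Real.exp_nat_mul, ← Real.exp_add]
        congr 1
        ring

lemma finite_scan (n r : ℕ) (p : Fin n → Fin n → ℝ) (a : Config n) :
    {x | ∃ D : Finset (Fin n), D.Nonempty ∧ D.card ≤ r ∧ x = scanStat n p D a}.Finite :=
  (Set.finite_range fun D : Finset (Fin n) => scanStat n p D a).subset (by
    rintro x ⟨D, -, -, rfl⟩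
    exact ⟨D, rfl⟩)

lemma prob_scanStat_ge {n : ℕ} {p : Fin n → Fin n → ℝ}
    (hp : ∀ i j : Fin n, i ≠ j → p i j ∈ Set.Icc (0 : ℝ) 1) {D : Finset (Fin n)}
    (hl : 0 < (D.card : ℝ) * Real.log ((n : ℝ) / D.card)) {t : ℝ} (ht : 0 < t) :
    prob n (nullW n p) {a | t ≤ scanStat n p D a} ≤
      Real.exp (-(t * ((D.card : ℝ) * Real.log ((n : ℝ) / D.card)))) := by
  have hw : ∀ e, nullW n p e ∈ Set.Icc (0 : ℝ) 1 := fun e => hp _ _ e.2.ne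
  by_cases hμ : 0 < expCount n p D
  · refine le_trans (prob_mono hw ?_) (prob_bennett hw D hμ (mul_pos ht hl))
    intro a ha
    change t ≤ scanStat n p D a at ha
    rw [scanStat, if_pos hμ, le_div_iff₀ hl] at ha
    exact ha
  · have : {a | t ≤ scanStat n p D a} = ∅ := by
      rw [Set.eq_empty_iff_forall_notMem]
      intro a ha
      change t ≤ scanStat n p D a at ha
      rw [scanStat, if_neg hμ] at ha
      linarith
    rw [this]
    simp [prob, (Real.exp_pos _).le]

lemma type_one_le {n r : ℕ} {p : Fin n → Fin n → ℝ}
    (hp : ∀ i j : Fin n, i ≠ j → p i j ∈ Set.Icc (0 : ℝ) 1) (hrn : r < n)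
    {ε : ℝ} (hε : 0 < ε) (hq : Real.exp (1 - ε / 2 * Real.log ((n : ℝ) / r)) < 1) :
    prob n (nullW n p) {a | scanTest n r p ε a = true} ≤
      Real.exp (1 - ε / 2 * Real.log ((n : ℝ) / r)) /
        (1 - Real.exp (1 - ε / 2 * Real.log ((n : ℝ) / r))) := by
  classical
  have hw : ∀ e, nullW n p e ∈ Set.Icc (0 : ℝ) 1 := fun e => hp _ _ e.2.ne
  set q := Real.exp (1 - ε / 2 * Real.log ((n : ℝ) / r)) with hqdef
  set S : Finset (Finset (Fin n)) :=
    Finset.univ.filter fun D => D.Nonempty ∧ D.card ≤ r with hS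
  have h1 : prob n (nullW n p) {a | scanTest n r p ε a = true} ≤
      ∑ D ∈ S, prob n (nullW n p) {a | 1 + ε / 2 ≤ scanStat n p D a} := by
    refine prob_le_sum hw S _ _ fun a ha => ?_
    have ha' : 1 + ε / 2 ≤
        sSup {x | ∃ D : Finset (Fin n), D.Nonempty ∧ D.card ≤ r ∧ x = scanStat n p D a} := by
      by_contra hcon
      simp [scanTest, hcon] at ha
    have hne : {x | ∃ D : Finset (Fin n), D.Nonempty ∧ D.card ≤ r ∧
        x = scanStat n p D a}.Nonempty := by
      by_contra hcon
      rw [Set.not_nonempty_iff_eq_empty] at hcon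
      rw [hcon, Real.sSup_empty] at ha'
      linarith
    obtain ⟨D, hD, hDr, hx⟩ := hne.csSup_mem (finite_scan n r p a)
    rw [hx] at ha'
    exact ⟨D, by simp [hS, hD, hDr], ha'⟩
  set g : ℕ → ℝ := fun k => Real.exp (-((1 + ε / 2) * (k * Real.log ((n : ℝ) / k)))) with hg
  have h2 : ∀ D ∈ S, prob n (nullW n p) {a | 1 + ε / 2 ≤ scanStat n p D a} ≤ g D.card := by
    intro D hD
    obtain ⟨hD1, hD2⟩ := (Finset.mem_filter.1 hD).2
    have hc : 1 ≤ D.card := hD1.card_pos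
    exact prob_scanStat_ge hp (mul_pos (by exact_mod_cast hc)
      (log_div_pos hc (hD2.trans_lt hrn))) (by linarith)
  have hmaps : ∀ D ∈ S, D.card ∈ Finset.Ico 1 (r + 1) := by
    intro D hD
    obtain ⟨hD1, hD2⟩ := (Finset.mem_filter.1 hD).2
    have hc : 1 ≤ D.card := hD1.card_pos
    exact Finset.mem_Ico.2 ⟨hc, by omega⟩
  calc _ ≤ ∑ D ∈ S, g D.card := h1.trans (Finset.sum_le_sum h2)
    _ = ∑ k ∈ Finset.Ico 1 (r + 1), ∑ D ∈ S with D.card = k, g D.card :=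
        (Finset.sum_fiberwise_of_maps_to hmaps _).symm
    _ ≤ ∑ k ∈ Finset.Ico 1 (r + 1), q ^ k := by
        refine Finset.sum_le_sum fun k hk => ?_
        obtain ⟨hk1, hk2⟩ := Finset.mem_Ico.1 hk
        refine le_trans ?_ (choose_mul_exp_le hε hk1 (Nat.lt_succ_iff.1 hk2) hrn)
        rw [Finset.sum_congr rfl fun D hD => by rw [(Finset.mem_filter.1 hD).2],
          Finset.sum_const, nsmul_eq_mul]
        refine mul_le_mul_of_nonneg_right ?_ (Real.exp_pos _).le
        have : (S.filter fun D => D.card = k) ⊆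
            Finset.powersetCard k (Finset.univ : Finset (Fin n)) := fun D hD =>
          Finset.mem_powersetCard.2 ⟨Finset.subset_univ _, (Finset.mem_filter.1 hD).2⟩
        have := Finset.card_le_card this
        rw [Finset.card_powersetCard, Finset.card_univ, Fintype.card_fin] at this
        exact_mod_cast this
    _ ≤ q / (1 - q) := by
        have := geom_sum_Ico_le_of_lt_one (m := 1) (n := r + 1) (Real.exp_pos _).le hq
        rwa [pow_one] at this

/-! ### Type-II error -/

/-- Sub-Gaussian lower tail for `e(D)`: the mean `m` also bounds the variance. -/
lemma prob_lower_tail {n : ℕ} {w : Edge n → ℝ} (hw : ∀ e, w e ∈ Set.Icc (0 : ℝ) 1)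
    (D : Finset (Fin n)) {m t : ℝ} (hm : meanCount n w D = m) (hm0 : 0 < m) (ht : 0 ≤ t)
    (htm : t ≤ m) :
    prob n w {a | eCount n D a ≤ m - t} ≤ Real.exp (-(t ^ 2 / (4 * m))) := by
  set s := t / (2 * m) with hs
  have hs0 : 0 ≤ s := by positivity
  have hs1 : s ≤ 1 := by
    rw [hs, div_le_one (by positivity)]
    linarith
  have h := prob_chernoff hw D (-s) (m - t) {a | eCount n D a ≤ m - t} fun a ha => by
    have := mul_le_mul_of_nonneg_left (show eCount n D a ≤ m - t from ha) hs0
    linarith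
  refine h.trans (Real.exp_le_exp.2 ?_)
  rw [hm]
  have he := (abs_le.1 (Real.abs_exp_sub_one_sub_id_le (x := -s)
    (by rw [abs_neg, abs_of_nonneg hs0]; exact hs1))).2
  have h1 := mul_le_mul_of_nonneg_right he hm0.le
  have h2 : t ^ 2 / (4 * m) = s * t - m * s ^ 2 := by
    rw [hs]
    field_simp
    ring
  rw [h2]
  nlinarith

lemma altW_mem {n : ℕ} {p : Fin n → Fin n → ℝ} {lam : ℝ} {C : Finset (Fin n)}
    (hp : ∀ i j : Fin n, i ≠ j → p i j ∈ Set.Icc (0 : ℝ) 1) (hlam : 1 ≤ lam)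
    (hlamp : ∀ i ∈ C, ∀ j ∈ C, lam * p i j ≤ 1) (e : Edge n) :
    altW n p lam C e ∈ Set.Icc (0 : ℝ) 1 := by
  unfold altW
  split_ifs with h
  · exact ⟨mul_nonneg (by linarith) (hp _ _ e.2.ne).1, hlamp _ h.1 _ h.2⟩
  · exact hp _ _ e.2.ne

lemma meanCount_altW {n : ℕ} {p : Fin n → Fin n → ℝ} {lam : ℝ} {C D : Finset (Fin n)}
    (hDC : D ⊆ C) : meanCount n (altW n p lam C) D = lam * expCount n p D := by
  unfold meanCount expCount altW
  rw [Finset.mul_sum]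
  refine Finset.sum_congr rfl fun e _ => ?_
  by_cases h : e.1.1 ∈ D ∧ e.1.2 ∈ D
  · rw [if_pos h, if_pos h, if_pos ⟨hDC h.1, hDC h.2⟩]
  · rw [if_neg h, if_neg h, mul_zero]

/-- Type-II error when some `D ⊆ C`, with null mean `μ`, satisfies the scan condition. The
threshold `λμ - δ(λ - 1)μ` is placed relative to the excess `(λ - 1)μ` and not to the mean, so
that the bound is uniform over `λ` close to `1`. -/
lemma type_two_le {n r : ℕ} {p : Fin n → Fin n → ℝ} {lam : ℝ} {C D : Finset (Fin n)}
    (hp : ∀ i j : Fin n, i ≠ j → p i j ∈ Set.Icc (0 : ℝ) 1) (hlam : 1 ≤ lam)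
    (hlamp : ∀ i ∈ C, ∀ j ∈ C, lam * p i j ≤ 1) (hrn : r < n) (hC : C.card = r)
    (hDC : D ⊆ C) (hD : D.Nonempty) {ε δ M : ℝ} (hε : 0 < ε)
    (hδ : δ = ε / (4 * (1 + ε)))
    (hcond : 1 + ε ≤ expCount n p D * hFun (lam - 1) /
      ((D.card : ℝ) * Real.log ((n : ℝ) / (D.card : ℝ))))
    (hM : M ≤ lam * expCount n p D) :
    prob n (altW n p lam C) {a | scanTest n r p ε a = false} ≤
      Real.exp (-(δ ^ 2 / 16 * min (Real.log ((n : ℝ) / r)) M)) := by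
  have hw := altW_mem hp hlam hlamp
  have hc1 : 1 ≤ D.card := hD.card_pos
  have hcr : D.card ≤ r := hC ▸ Finset.card_le_card hDC
  have hL0 := log_div_pos (hc1.trans hcr) hrn
  have hLl := log_div_card_ge hc1 hcr hrn
  set L := Real.log ((n : ℝ) / r)
  set l := Real.log ((n : ℝ) / D.card)
  set μ := expCount n p D with hμdef
  have hc1' : (1 : ℝ) ≤ D.card := by exact_mod_cast hc1
  have hkl : L ≤ D.card * l := by nlinarith
  have hkl0 : 0 < D.card * l := hL0.trans_le hkl
  have hδ0 : 0 < δ := by rw [hδ]; positivity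
  have hδε : 2 * δ * (1 + ε) = ε / 2 := by
    rw [hδ]
    field_simp
    ring
  have hδ1 : δ ≤ 1 / 4 := by nlinarith
  rw [le_div_iff₀ hkl0] at hcond
  have hh0 : 0 ≤ hFun (lam - 1) := hFun_nonneg (by linarith)
  have hμ : 0 < μ := by
    by_contra hcon
    have := mul_nonpos_of_nonpos_of_nonneg (not_lt.1 hcon) hh0
    have := mul_pos (by linarith : 0 < 1 + ε) hkl0
    linarith
  have hm0 : 0 < lam * μ := by positivity
  have ht0 : 0 ≤ δ * (lam - 1) * μ :=
    mul_nonneg (mul_nonneg hδ0.le (by linarith)) hμ.le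
  have htm : δ * (lam - 1) * μ ≤ lam * μ := by
    refine mul_le_mul_of_nonneg_right ?_ hμ.le
    nlinarith
  have hsub : {a | scanTest n r p ε a = false} ⊆
      {a | eCount n D a ≤ lam * μ - δ * (lam - 1) * μ} := by
    intro a ha
    change eCount n D a ≤ lam * μ - δ * (lam - 1) * μ
    by_contra hcon
    rw [not_le] at hcon
    have h1 : (1 - δ) * (lam - 1) ≤ max (eCount n D a / μ - 1) 0 := by
      refine le_max_of_le_left ?_
      have : (1 - δ) * (lam - 1) + 1 ≤ eCount n D a / μ := by
        rw [le_div_iff₀ hμ]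
        nlinarith
      linarith
    have h2 := hFun_mono (mul_nonneg (by linarith) (by linarith)) h1
    have h3 := (hFun_shrink (by linarith : 0 ≤ lam - 1) hδ0.le (by linarith)).trans h2
    have h4 : 1 + ε / 2 ≤ scanStat n p D a := by
      rw [scanStat, if_pos hμ, le_div_iff₀ hkl0]
      have h5 := mul_le_mul_of_nonneg_left h3 hμ.le
      have h6 := mul_le_mul_of_nonneg_left hcond (by linarith : 0 ≤ 1 - 2 * δ)
      have h7 : (1 - 2 * δ) * ((1 + ε) * (D.card * l)) = (1 + ε / 2) * (D.card * l) := by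
        linear_combination (-(D.card * l)) * hδε
      change (1 + ε / 2) * (D.card * l) ≤ _
      calc (1 + ε / 2) * (D.card * l) ≤ (1 - 2 * δ) * (μ * hFun (lam - 1)) := by
            rw [← h7]; exact h6
        _ ≤ _ := by linarith
    have h5 := h4.trans (le_csSup (finite_scan n r p a).bddAbove ⟨D, hD, hcr, rfl⟩)
    change scanTest n r p ε a = false at ha
    rw [scanTest, if_pos h5] at ha
    exact absurd ha (by simp)
  refine (prob_mono hw hsub).trans
    ((prob_lower_tail hw D (meanCount_altW hDC) hm0 ht0 htm).trans (Real.exp_le_exp.2 ?_))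
  rw [neg_le_neg_iff, le_div_iff₀ (by positivity)]
  -- For `λ ≤ 2` the scan condition bounds `(λ - 1)² μ ≥ μ h(λ - 1)` below by `log (n / r)`;
  -- for `λ > 2` the excess is comparable to the mean `λ μ ≥ M`.
  have key : min L M * lam ≤ 4 * ((lam - 1) ^ 2 * μ) := by
    rcases le_or_gt lam 2 with h2 | h2
    · have h3 := mul_le_mul_of_nonneg_left (hFun_le_sq (by linarith : 0 ≤ lam - 1)) hμ.le
      have h4 : L ≤ (lam - 1) ^ 2 * μ := by nlinarith
      have h5 : min L M * lam ≤ L * lam :=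
        mul_le_mul_of_nonneg_right (min_le_left _ _) (by linarith)
      nlinarith
    · have h5 : min L M * lam ≤ lam * μ * lam :=
        mul_le_mul_of_nonneg_right ((min_le_right _ _).trans hM) (by linarith)
      have h6 : lam ^ 2 ≤ 4 * (lam - 1) ^ 2 := by nlinarith
      nlinarith
  have h8 := mul_le_mul_of_nonneg_left key (by positivity : 0 ≤ δ ^ 2 * μ)
  nlinarith

/-- The maximizer of the objective attains `condSup`, because `h(λ - 1) ≥ 0` does not depend
on the subset. -/
lemma exists_maximizer {n : ℕ} {p : Fin n → Fin n → ℝ} {lam : ℝ} {C : Finset (Fin n)}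
    (hlam : 1 ≤ lam) (hC : C.Nonempty) :
    ∃ D : Finset (Fin n), D ⊆ C ∧ D.Nonempty ∧
      (∀ D' : Finset (Fin n), D' ⊆ C → D'.Nonempty → objective n p D' ≤ objective n p D) ∧
      condSup n p lam C ≤ expCount n p D * hFun (lam - 1) /
        ((D.card : ℝ) * Real.log ((n : ℝ) / (D.card : ℝ))) := by
  classical
  obtain ⟨D, hD, hmax⟩ := Finset.exists_max_image
    (Finset.univ.filter fun D : Finset (Fin n) => D ⊆ C ∧ D.Nonempty) (objective n p)
    ⟨C, by simp [hC]⟩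
  obtain ⟨hDC, hDne⟩ := (Finset.mem_filter.1 hD).2
  have hmax' : ∀ D' : Finset (Fin n), D' ⊆ C → D'.Nonempty →
      objective n p D' ≤ objective n p D := fun D' h1 h2 => hmax D' (by simp [h1, h2])
  refine ⟨D, hDC, hDne, hmax', csSup_le ⟨_, C, subset_rfl, hC, rfl⟩ ?_⟩
  rintro x ⟨D', h1, h2, rfl⟩
  have := mul_le_mul_of_nonneg_right (hmax' D' h1 h2)
    (hFun_nonneg (by linarith : 0 ≤ lam - 1))
  simpa only [objective, div_mul_eq_mul_div] using this

lemma risk_nonneg {n r : ℕ} {p : Fin n → Fin n → ℝ} {lam : Finset (Fin n) → ℝ}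
    (hp : ∀ i j : Fin n, i ≠ j → p i j ∈ Set.Icc (0 : ℝ) 1)
    (hlam : ∀ C : Finset (Fin n), C.card = r → 1 ≤ lam C)
    (hlamp : ∀ C : Finset (Fin n), C.card = r → ∀ i ∈ C, ∀ j ∈ C, lam C * p i j ≤ 1)
    (ψ : Config n → Bool) : 0 ≤ risk n r p lam ψ := by
  refine add_nonneg (prob_nonneg (fun e => hp _ _ e.2.ne) _) (Real.sSup_nonneg ?_)
  rintro x ⟨C, hC, rfl⟩
  exact prob_nonneg (altW_mem hp (hlam C hC) (hlamp C hC)) _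

lemma tendsto_log_div {r : ℕ → ℕ} (hr : ∀ n, 2 ≤ n → 1 ≤ r n ∧ r n < n)
    (hro : (fun n => (r n : ℝ)) =o[atTop] fun n => (n : ℝ)) :
    Tendsto (fun n : ℕ => Real.log ((n : ℝ) / r n)) atTop atTop := by
  refine Real.tendsto_log_atTop.comp ?_
  have h : Tendsto (fun n : ℕ => (r n : ℝ) / (n : ℝ)) atTop (nhdsWithin 0 (Set.Ioi 0)) := by
    refine tendsto_nhdsWithin_iff.2 ⟨hro.tendsto_div_nhds_zero, ?_⟩
    filter_upwards [eventually_ge_atTop 2] with n hn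
    have h1 : (0 : ℝ) < r n := by exact_mod_cast (hr n hn).1
    have h2 : (0 : ℝ) < n := by exact_mod_cast (by omega : 0 < n)
    exact div_pos h1 h2
  refine h.inv_tendsto_nhdsGT_zero.congr fun n => ?_
  simp [inv_div]

/-- **Theorem 2** (scan test with known edge probabilities is powerful). If `r(n) = o(n)`,
the quantity `λ_C · E₀[e(D*_C)]` (over all communities `C` of size `r n` and all maximizers
`D*_C` of `D ↦ E₀[e(D)]/(|D| log(n/|D|))`) tends uniformly to `∞`, and eventually every
community `C` of size `r n` satisfies the scan condition
`max_{∅ ≠ D ⊆ C} E₀[e(D)] h(λ_C - 1)/(|D| log(n/|D|)) ≥ 1 + ε`, then the known-probability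
scan test with parameter `ε` is asymptotically powerful. -/
theorem known_scan_test_powerful
    (p : ∀ n, Fin n → Fin n → ℝ) (r : ℕ → ℕ) (lam : ∀ n, Finset (Fin n) → ℝ)
    (hp : ∀ n, ∀ i j : Fin n, i ≠ j → p n i j ∈ Set.Icc (0 : ℝ) 1)
    (hsymm : ∀ n, ∀ i j : Fin n, p n i j = p n j i)
    (hr : ∀ n, 2 ≤ n → 1 ≤ r n ∧ r n < n)
    (hlam : ∀ n, ∀ C : Finset (Fin n), C.card = r n → 1 ≤ lam n C)
    (hlamp : ∀ n, ∀ C : Finset (Fin n), C.card = r n →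
      ∀ i ∈ C, ∀ j ∈ C, lam n C * p n i j ≤ 1)
    (hro : (fun n => (r n : ℝ)) =o[atTop] fun n => (n : ℝ))
    (hinfty : Tendsto (fun n => sInf {x | ∃ C : Finset (Fin n), C.card = r n ∧
      ∃ D : Finset (Fin n), D ⊆ C ∧ D.Nonempty ∧
        (∀ D' : Finset (Fin n), D' ⊆ C → D'.Nonempty →
          objective n (p n) D' ≤ objective n (p n) D) ∧
        x = lam n C * expCount n (p n) D}) atTop atTop)
    (ε : ℝ) (hε : 0 < ε)
    (hcond : ∀ᶠ n in atTop, ∀ C : Finset (Fin n), C.card = r n →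
      1 + ε ≤ condSup n (p n) (lam n C) C) :
    Tendsto (fun n => risk n (r n) (p n) (lam n) (scanTest n (r n) (p n) ε)) atTop (nhds 0) := by
  set M : ℕ → ℝ := fun n => sInf {x | ∃ C : Finset (Fin n), C.card = r n ∧
      ∃ D : Finset (Fin n), D ⊆ C ∧ D.Nonempty ∧
        (∀ D' : Finset (Fin n), D' ⊆ C → D'.Nonempty →
          objective n (p n) D' ≤ objective n (p n) D) ∧
        x = lam n C * expCount n (p n) D} with hMdef
  have hL := tendsto_log_div hr hro
  set L : ℕ → ℝ := fun n => Real.log ((n : ℝ) / r n) with hLdef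
  set q : ℕ → ℝ := fun n => Real.exp (1 - ε / 2 * L n) with hqdef
  have hq : Tendsto q atTop (nhds 0) := by
    refine Real.tendsto_exp_atBot.comp ?_
    have h1 : Tendsto (fun n => ε / 2 * L n) atTop atTop := hL.const_mul_atTop (by positivity)
    exact tendsto_atBot_add_const_left _ 1 (tendsto_neg_atTop_atBot.comp h1)
  set δ : ℝ := ε / (4 * (1 + ε)) with hδ
  have hδ0 : 0 < δ := by positivity
  have hII : Tendsto (fun n => Real.exp (-(δ ^ 2 / 16 * min (L n) (M n)))) atTop (nhds 0) := by
    have hmin : Tendsto (fun n => min (L n) (M n)) atTop atTop := by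
      rw [tendsto_atTop] at hL hinfty ⊢
      intro b
      filter_upwards [hL b, hinfty b] with n h1 h2 using le_min h1 h2
    have h1 : Tendsto (fun n => δ ^ 2 / 16 * min (L n) (M n)) atTop atTop :=
      hmin.const_mul_atTop (by positivity)
    exact Real.tendsto_exp_atBot.comp (tendsto_neg_atTop_atBot.comp h1)
  have hI : Tendsto (fun n => q n / (1 - q n)) atTop (nhds 0) := by
    have := hq.div (tendsto_const_nhds.sub hq : Tendsto (fun n => 1 - q n) atTop _)
      (by norm_num)
    rw [sub_zero, zero_div] at this
    exact this
  refine squeeze_zero' (Eventually.of_forall fun n =>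
    risk_nonneg (hp n) (hlam n) (hlamp n) _) ?_ (by simpa using hI.add hII)
  filter_upwards [eventually_ge_atTop 2, hq.eventually_lt_const zero_lt_one, hcond]
    with n hn hqn hcn
  obtain ⟨hr1, hrn⟩ := hr n hn
  refine add_le_add (type_one_le (hp n) hrn hε hqn) ?_
  refine Real.sSup_le ?_ (Real.exp_pos _).le
  rintro x ⟨C, hC, rfl⟩
  have hCne : C.Nonempty := Finset.card_pos.1 (by omega)
  obtain ⟨D, hDC, hD, hmax, hsup⟩ := exists_maximizer (p := p n) (hlam n C hC) hCne
  refine type_two_le (hp n) (hlam n C hC) (hlamp n C hC) hrn hC hDC hD hε hδ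
    ((hcn C hC).trans hsup) (csInf_le (Set.Finite.bddBelow ?_) ⟨C, hC, D, hDC, hD, hmax, rfl⟩)
  refine (Set.finite_range fun CD : Finset (Fin n) × Finset (Fin n) =>
    lam n CD.1 * expCount n (p n) CD.2).subset ?_
  rintro x ⟨C', -, D', -, -, -, rfl⟩
  exact ⟨(C', D'), rfl⟩

end CommunityDetection
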